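/- If R is an integral domain with the property that each maximal t-ideal of R is divisorial, then R is a t#-domain. In particular, every Mori domain is a t#-domain. -/

import Mathlib

/-!
The `v`-closure of an ideal `I` is the intersection of the conductors `(R :_R u)` containing `I`
(`mem_vIdeal_iff`); in particular every nonzero conductor is a `t`-ideal. If a maximal `t`-ideal `M` is
divisorial, it is therefore contained in `(R :_R u)` for some `u ∉ R`, and `M = (R :_R u)` by
maximality. Hence `u ∉ R_M`, whereas any maximal `t`-ideal `N ≠ M` does not contain `M`, so that
`u ∈ R_N`. Thus `u` separates `⋂ R_N` over any set of maximal `t`-ideals omitting `M` from the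
same intersection over any set containing `M` (`exists_separating`).

In a Mori domain, a nonzero finitely generated `J ⊆ M` with `J_v` maximal satisfies
`M ⊆ J_v ⊆ M_t = M`, so every `t`-ideal `M` is divisorial (`IsMori.isDivisorialIdeal`).
-/

/-
Definitions following S. Gabelli, E. Houston, T. G. Lucas,
"The t#-property for integral domains".

All the star-operation notions (`v`, `t`, maximal `t`-ideals, etc.) are defined for a
commutative ring `R` via its total quotient field `FractionRing R`; in all theorems `R`
is assumed to be an integral domain, so `FractionRing R` is its quotient field `K`.
-/

noncomputable section

namespace TSharpPaper

variable (R : Type*) [CommRing R]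

/-- The image of an integral ideal in the quotient field, as an `R`-submodule. -/
def idealSub (I : Ideal R) : Submodule R (FractionRing R) :=
  Submodule.map (Algebra.linearMap R (FractionRing R)) I

/-- The divisorial closure `I_v = (I⁻¹)⁻¹` of an integral ideal, as an integral ideal.
Here for a submodule `J` of `K`, `1 / J = {x ∈ K : xJ ⊆ R}` is `J⁻¹`. -/
def vIdeal (I : Ideal R) : Ideal R :=
  Submodule.comap (Algebra.linearMap R (FractionRing R))
    ((1 : Submodule R (FractionRing R)) / (1 / idealSub R I))

/-- The `t`-closure `I_t = ⋃ J_v`, the union over all nonzero finitely generated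
subideals `J` of `I`. -/
def tIdeal (I : Ideal R) : Ideal R :=
  ⨆ (J : Ideal R) (_ : J.FG) (_ : J ≠ ⊥) (_ : J ≤ I), vIdeal R J

/-- A (nonzero) integral ideal is divisorial if `I = I_v`. -/
def IsDivisorialIdeal (I : Ideal R) : Prop := I ≠ ⊥ ∧ vIdeal R I = I

/-- A (nonzero) integral ideal is a `t`-ideal if `I = I_t`. -/
def IsTIdeal (I : Ideal R) : Prop := I ≠ ⊥ ∧ tIdeal R I = I

/-- A `t`-prime is a prime `t`-ideal. -/
def IsTPrime (P : Ideal R) : Prop := P.IsPrime ∧ IsTIdeal R P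

/-- The set `t-Max(R)` of maximal `t`-ideals: integral ideals maximal among proper
integral `t`-ideals. -/
def tMax : Set (Ideal R) :=
  {M | IsTIdeal R M ∧ M ≠ ⊤ ∧ ∀ J : Ideal R, IsTIdeal R J → J ≠ ⊤ → M ≤ J → J = M}

/-- The localization `R_P` of `R` at (the complement of) a prime `P`, viewed as a subset
of the quotient field. -/
def locSet (P : Ideal R) : Set (FractionRing R) :=
  {x | ∃ r s : R, s ∉ P ∧ x * algebraMap R (FractionRing R) s = algebraMap R (FractionRing R) r}

/-- The image of `R` in its quotient field. -/
def imageR : Set (FractionRing R) := Set.range (algebraMap R (FractionRing R))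

/-- `R` is a `t#`-domain if `⋂_{M ∈ 𝔐₁} R_M ≠ ⋂_{M ∈ 𝔐₂} R_M` for any two distinct
subsets `𝔐₁, 𝔐₂` of `t-Max(R)`. -/
def IsTSharp : Prop :=
  ∀ 𝔐₁ 𝔐₂ : Set (Ideal R), 𝔐₁ ⊆ tMax R → 𝔐₂ ⊆ tMax R → 𝔐₁ ≠ 𝔐₂ →
    (⋂ M ∈ 𝔐₁, locSet R M) ≠ ⋂ M ∈ 𝔐₂, locSet R M

/-- The conductor `(R :_R u) = {r ∈ R : r·u ∈ R}` of an element `u` of the quotient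
field. -/
def colonIdeal (u : FractionRing R) : Ideal R :=
  Submodule.comap (Algebra.linearMap R (FractionRing R))
    (Submodule.comap (LinearMap.mulLeft R u) (1 : Submodule R (FractionRing R)))

/-- `R` is `v`-coherent if for each nonzero finitely generated ideal `I` of `R`,
`I⁻¹ = J_v` for some finitely generated fractional ideal `J`. -/
def IsVCoherent : Prop :=
  ∀ I : Ideal R, I ≠ ⊥ → I.FG →
    ∃ J : Submodule R (FractionRing R), J.FG ∧
      (1 : Submodule R (FractionRing R)) / idealSub R I = 1 / (1 / J)

/-- An ideal is `v`-finite if it equals `J_v` for some finitely generated ideal `J`. -/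
def IsVFinite (I : Ideal R) : Prop := ∃ J : Ideal R, J.FG ∧ I = vIdeal R J

/-- `Φ(Λ)`: the set of all integral `t`-ideals `I` of `R` with `I ⊄ P` for every
`P ∈ Λ`. -/
def Phi (Λ : Set (Ideal R)) : Set (Ideal R) :=
  {I | IsTIdeal R I ∧ ∀ P ∈ Λ, ¬ I ≤ P}

/-- `Φ(Λ)` is `v`-finite if every `t`-ideal in `Φ(Λ)` contains a `v`-finite `t`-ideal
belonging to `Φ(Λ)`. -/
def PhiVFinite (Λ : Set (Ideal R)) : Prop :=
  ∀ I ∈ Phi R Λ, ∃ J ∈ Phi R Λ, J ≤ I ∧ IsVFinite R J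

/-- The generalized ring of quotients `R_{Φ(Λ)} = {x ∈ K : xI ⊆ R for some I ∈ Φ(Λ)}`. -/
def RPhi (Λ : Set (Ideal R)) : Set (FractionRing R) :=
  {x | ∃ I ∈ Phi R Λ, ∀ a ∈ I, x * algebraMap R (FractionRing R) a ∈ imageR R}

/-- `Λ` is a set of pairwise incomparable `t`-primes of `R`. -/
def IncompTPrimes (Λ : Set (Ideal R)) : Prop :=
  (∀ P ∈ Λ, IsTPrime R P) ∧ ∀ P ∈ Λ, ∀ Q ∈ Λ, P ≤ Q → P = Q

/-- `R` is a Prüfer `v`-multiplication domain if `R_M` is a valuation domain for every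
maximal `t`-ideal `M` of `R`. -/
def IsPVMD [IsDomain R] : Prop :=
  ∀ M ∈ tMax R, ∀ x : FractionRing R, x ≠ 0 → x ∈ locSet R M ∨ x⁻¹ ∈ locSet R M

/-- `R` is a Mori domain: the ascending chain condition holds on integral divisorial
ideals. -/
def IsMori : Prop :=
  ∀ f : ℕ → Ideal R, (∀ n, IsDivisorialIdeal R (f n)) → (∀ n, f n ≤ f (n + 1)) →
    ∃ n, ∀ m, n ≤ m → f m = f n

/-- The localization `T_Q` of a subring `T` of the quotient field of `R` at (the
complement of) an ideal `Q` of `T`, viewed as a subset of the quotient field of `R`. -/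
def locSetSub (T : Subring (FractionRing R)) (Q : Ideal T) : Set (FractionRing R) :=
  {x | ∃ r s : T, s ∉ Q ∧ x * (s : FractionRing R) = (r : FractionRing R)}

/-- `T` is an overring of `R`: a subring of the quotient field containing (the image
of) `R`. -/
def IsOverring (T : Subring (FractionRing R)) : Prop :=
  ∀ r : R, algebraMap R (FractionRing R) r ∈ T

/-- The canonical ring homomorphism from `R` to an overring `T`; `M ∩ R` is the
contraction `Ideal.comap (intoOverring R T h) M`. -/
def intoOverring (T : Subring (FractionRing R)) (h : IsOverring R T) : R →+* T :=
  (algebraMap R (FractionRing R)).codRestrict T h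

/-- `T` is a `t`-flat overring of `R`: `T_M = R_{M ∩ R}` for each maximal `t`-ideal `M`
of `T`. -/
def IsTFlat (T : Subring (FractionRing R)) : Prop :=
  ∃ h : IsOverring R T, ∀ M ∈ tMax (↥T),
    locSetSub R T M = locSet R (Ideal.comap (intoOverring R T h) M)

/-- `T` is `t`-linked over `R`: for each nonzero finitely generated ideal `I` of `R` with
`(R : I) = R` one has `(T : IT) = T`. -/
def IsTLinked (T : Subring (FractionRing R)) : Prop :=
  ∀ I : Ideal R, I ≠ ⊥ → I.FG →
    (1 : Submodule R (FractionRing R)) / idealSub R I = 1 →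
    {x : FractionRing R | ∀ a ∈ I, x * algebraMap R (FractionRing R) a ∈ T} =
      (T : Set (FractionRing R))

/-- `T` is a `t`-subintersection of `R`: `T = ⋂_{P ∈ Λ} R_P` for some set `Λ` of
`t`-primes of `R`. -/
def IsTSubintersection (T : Subring (FractionRing R)) : Prop :=
  ∃ Λ : Set (Ideal R), (∀ P ∈ Λ, IsTPrime R P) ∧
    (T : Set (FractionRing R)) = ⋂ P ∈ Λ, locSet R P

/-- `(P : P) = {x ∈ K : xP ⊆ P}`, as a subring of the quotient field of `R`. -/
def colonPP (P : Ideal R) : Subring (FractionRing R) where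
  carrier := {x | ∀ a ∈ P, x * algebraMap R (FractionRing R) a ∈ idealSub R P}
  one_mem' := by
    intro a ha
    rw [one_mul]
    exact Submodule.mem_map_of_mem ha
  mul_mem' := by
    intro x y hx hy a ha
    rcases hy a ha with ⟨b, hb, hby⟩
    rw [mul_assoc, ← hby]
    exact hx b hb
  add_mem' := by
    intro x y hx hy a ha
    rw [add_mul]
    exact Submodule.add_mem _ (hx a ha) (hy a ha)
  zero_mem' := by
    intro a ha
    rw [zero_mul]
    exact Submodule.zero_mem _
  neg_mem' := by
    intro x hx a ha
    rw [neg_mul]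
    exact Submodule.neg_mem _ (hx a ha)

/-- `R` is a `t#_P`-domain: for sets `Λ₁ ≠ Λ₂` of `t`-primes such that `(P + Q)_t = R`
for distinct `P ∈ Λ₁`, `Q ∈ Λ₂`, one has `R_{Φ(Λ₁)} ≠ R_{Φ(Λ₂)}`. -/
def IsTSharpP : Prop :=
  ∀ Λ₁ Λ₂ : Set (Ideal R), (∀ P ∈ Λ₁, IsTPrime R P) → (∀ Q ∈ Λ₂, IsTPrime R Q) →
    (∀ P ∈ Λ₁, ∀ Q ∈ Λ₂, P ≠ Q → tIdeal R (P ⊔ Q) = ⊤) →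
    Λ₁ ≠ Λ₂ → RPhi R Λ₁ ≠ RPhi R Λ₂

/-- A `t`-localizing system of ideals of `R`: a set of integral `t`-ideals closed under
`t`-multiplication and satisfying the two localizing-system closure properties. -/
def IsTLocalizingSystem (Φ : Set (Ideal R)) : Prop :=
  (∀ I ∈ Φ, IsTIdeal R I) ∧
  (∀ I ∈ Φ, ∀ J ∈ Φ, tIdeal R (I * J) ∈ Φ) ∧
  (∀ I ∈ Φ, ∀ J : Ideal R, IsTIdeal R J → I ≤ J → J ∈ Φ) ∧
  (∀ I ∈ Φ, ∀ J : Ideal R, IsTIdeal R J →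
    (∀ a ∈ I, tIdeal R (Submodule.colon J (Ideal.span {a})) ∈ Φ) → J ∈ Φ)

/-- The ascending chain condition on `t`-primes of `R`. -/
def ACCTPrimes : Prop :=
  ∀ f : ℕ → Ideal R, (∀ n, IsTPrime R (f n)) → (∀ n, f n ≤ f (n + 1)) →
    ∃ n, ∀ m, n ≤ m → f m = f n

/-- The ascending chain condition on radical `t`-ideals of `R`. -/
def ACCRadicalTIdeals : Prop :=
  ∀ f : ℕ → Ideal R, (∀ n, IsTIdeal R (f n) ∧ (f n).radical = f n) →
    (∀ n, f n ≤ f (n + 1)) → ∃ n, ∀ m, n ≤ m → f m = f n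

/-- A prime `P` is branched if there is a `PR_P`-primary ideal of `R_P` different from
`PR_P` (the maximal ideal of `R_P`). -/
def IsBranched (P : Ideal R) (hP : P.IsPrime) : Prop :=
  letI := hP
  ∃ Q : Ideal (Localization.AtPrime P), Q.IsPrimary ∧
    Q ≠ IsLocalRing.maximalIdeal (Localization.AtPrime P)

/-- A prime ideal of a domain has height one. -/
def HeightOne (Q : Ideal R) : Prop :=
  Q ≠ ⊥ ∧ ∀ P : Ideal R, P.IsPrime → P < Q → P = ⊥

/-- A nonzero integral ideal `I` is `t`-invertible: `(I I⁻¹)_t = R`. -/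
def IsTInvertible (I : Ideal R) : Prop :=
  tIdeal R (Submodule.comap (Algebra.linearMap R (FractionRing R))
    (idealSub R I * ((1 : Submodule R (FractionRing R)) / idealSub R I))) = ⊤

variable {σ : Type*}

/-- An upper to zero: a prime ideal `Q` of `R[{X_α}]` with `Q ∩ R = 0`. -/
def IsUpperToZero (Q : Ideal (MvPolynomial σ R)) : Prop :=
  Q.IsPrime ∧ Ideal.comap (MvPolynomial.C : R →+* MvPolynomial σ R) Q = ⊥

/-- The content `c(f)` of a polynomial: the ideal of `R` generated by its
coefficients. -/
def mvContent (f : MvPolynomial σ R) : Ideal R :=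
  Ideal.span (Set.range fun m => MvPolynomial.coeff m f)

/-- The content `c(I)` of an ideal of `R[{X_α}]`: the ideal of `R` generated by the
coefficients of all polynomials in `I`. -/
def mvContentIdeal (Q : Ideal (MvPolynomial σ R)) : Ideal R :=
  Ideal.span {r | ∃ f ∈ Q, ∃ m, MvPolynomial.coeff m f = r}

/-- `R({X_α})`: the localization of `R[{X_α}]` at the (multiplicatively closed) set of
polynomials of unit content. -/
def mvNagata (σ : Type*) : Type _ :=
  Localization (Submonoid.closure {f : MvPolynomial σ R | mvContent R f = ⊤})

instance (σ : Type*) : CommRing (mvNagata R σ) := by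
  unfold mvNagata; infer_instance

/-- `R⟨{X_α}⟩`: the localization of `R[{X_α}]` at the (multiplicatively closed) set
`S = {f : c(f)_v = R}`. -/
def mvKronecker (σ : Type*) : Type _ :=
  Localization (Submonoid.closure {f : MvPolynomial σ R | vIdeal R (mvContent R f) = ⊤})

instance (σ : Type*) : CommRing (mvKronecker R σ) := by
  unfold mvKronecker; infer_instance


section Auxiliary

variable {R}

lemma mem_colonIdeal {u : FractionRing R} {a : R} :
    a ∈ colonIdeal R u ↔
      ∃ r : R, algebraMap R (FractionRing R) r = u * algebraMap R (FractionRing R) a := by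
  simp [colonIdeal, Submodule.mem_one]

/-- The `v`-closure of `I` is the intersection of all conductors `(R :_R u)` containing `I`. -/
lemma mem_vIdeal_iff {I : Ideal R} {a : R} :
    a ∈ vIdeal R I ↔ ∀ u : FractionRing R, I ≤ colonIdeal R u → a ∈ colonIdeal R u := by
  have key (u : FractionRing R) : u ∈ 1 / idealSub R I ↔ I ≤ colonIdeal R u := by
    rw [Submodule.mem_div_iff_forall_mul_mem]
    constructor
    · intro h b hb
      exact mem_colonIdeal.2 (Submodule.mem_one.1 (h _ (Submodule.mem_map_of_mem hb)))
    · rintro h _ ⟨b, hb, rfl⟩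
      exact Submodule.mem_one.2 (mem_colonIdeal.1 (h hb))
  rw [vIdeal, Submodule.mem_comap, Submodule.mem_div_iff_forall_mul_mem]
  refine forall_congr' fun u => imp_congr (key u) ?_
  rw [mem_colonIdeal, Submodule.mem_one, Algebra.linearMap_apply, mul_comm]

lemma le_vIdeal (I : Ideal R) : I ≤ vIdeal R I :=
  fun _ ha => mem_vIdeal_iff.2 fun _ hu => hu ha

lemma vIdeal_mono {I J : Ideal R} (h : I ≤ J) : vIdeal R I ≤ vIdeal R J :=
  fun _ ha => mem_vIdeal_iff.2 fun u hu => mem_vIdeal_iff.1 ha u (h.trans hu)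

lemma vIdeal_le_colonIdeal {I : Ideal R} {u : FractionRing R} (h : I ≤ colonIdeal R u) :
    vIdeal R I ≤ colonIdeal R u :=
  fun _ ha => mem_vIdeal_iff.1 ha u h

lemma vIdeal_idem (I : Ideal R) : vIdeal R (vIdeal R I) = vIdeal R I :=
  le_antisymm (fun _ ha => mem_vIdeal_iff.2 fun u hu =>
    mem_vIdeal_iff.1 ha u (vIdeal_le_colonIdeal hu)) (le_vIdeal _)

lemma isDivisorialIdeal_vIdeal {I : Ideal R} (hI : I ≠ ⊥) : IsDivisorialIdeal R (vIdeal R I) :=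
  ⟨fun h => hI (le_bot_iff.1 (h ▸ le_vIdeal I)), vIdeal_idem I⟩

lemma vIdeal_le_tIdeal {I J : Ideal R} (hJ : J.FG) (hJ0 : J ≠ ⊥) (hJI : J ≤ I) :
    vIdeal R J ≤ tIdeal R I :=
  le_iSup_of_le J <| le_iSup_of_le hJ <| le_iSup_of_le hJ0 <| le_iSup_of_le hJI le_rfl

lemma le_tIdeal (I : Ideal R) : I ≤ tIdeal R I := by
  intro a ha
  by_cases h0 : a = 0
  · simp [h0]
  · refine vIdeal_le_tIdeal (Submodule.fg_span_singleton a) ?_ ?_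
      (le_vIdeal _ (Ideal.mem_span_singleton_self a))
    · simpa [Ideal.span_singleton_eq_bot] using h0
    · simpa [Ideal.span_singleton_le_iff_mem] using ha

lemma isTIdeal_colonIdeal {u : FractionRing R} (h : colonIdeal R u ≠ ⊥) :
    IsTIdeal R (colonIdeal R u) :=
  ⟨h, le_antisymm (iSup_le fun _ => iSup_le fun _ => iSup_le fun _ => iSup_le fun hJ =>
    vIdeal_le_colonIdeal hJ) (le_tIdeal _)⟩

/-- A divisorial maximal `t`-ideal `M` is a conductor `(R :_R u)`. -/
lemma exists_eq_colonIdeal {M : Ideal R} (hM : M ∈ tMax R) (hv : IsDivisorialIdeal R M) :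
    ∃ u : FractionRing R, M = colonIdeal R u := by
  obtain ⟨⟨hM0, -⟩, hMtop, hmax⟩ := hM
  -- Properness gives `1 ∉ M_v`, so some conductor containing `M` is proper.
  have h1 : (1 : R) ∉ vIdeal R M := by
    rwa [hv.2, ← Ideal.ne_top_iff_one]
  rw [mem_vIdeal_iff] at h1
  push Not at h1
  obtain ⟨u, hMu, hu⟩ := h1
  refine ⟨u, (hmax _ (isTIdeal_colonIdeal ?_) ((Ideal.ne_top_iff_one _).2 hu) hMu).symm⟩
  exact fun h => hM0 (le_bot_iff.1 (h ▸ hMu))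

lemma mem_locSet_iff {u : FractionRing R} {N : Ideal R} :
    u ∈ locSet R N ↔ ¬ colonIdeal R u ≤ N := by
  rw [SetLike.not_le_iff_exists]
  constructor
  · rintro ⟨r, s, hs, h⟩
    exact ⟨s, mem_colonIdeal.2 ⟨r, h.symm⟩, hs⟩
  · rintro ⟨s, hsu, hs⟩
    obtain ⟨r, hr⟩ := mem_colonIdeal.1 hsu
    exact ⟨r, s, hs, hr.symm⟩

/-- For a divisorial maximal `t`-ideal `M`, some element of the quotient field lies outside
`R_M` but in `R_N` for every other maximal `t`-ideal `N`. -/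
lemma exists_separating {M : Ideal R} (hM : M ∈ tMax R) (hv : IsDivisorialIdeal R M) :
    ∃ u : FractionRing R, u ∉ locSet R M ∧ ∀ N ∈ tMax R, N ≠ M → u ∈ locSet R N := by
  obtain ⟨u, rfl⟩ := exists_eq_colonIdeal hM hv
  refine ⟨u, fun h => mem_locSet_iff.1 h le_rfl, fun N hN hNM => mem_locSet_iff.2 fun hle => ?_⟩
  exact hNM (hM.2.2 N hN.1 hN.2.1 hle)

lemma subset_of_iInter_locSet_eq (hdiv : ∀ M ∈ tMax R, IsDivisorialIdeal R M)
    {S T : Set (Ideal R)} (hS : S ⊆ tMax R) (hT : T ⊆ tMax R)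
    (h : (⋂ M ∈ S, locSet R M) = ⋂ M ∈ T, locSet R M) : S ⊆ T := by
  intro M hMS
  by_contra hMT
  obtain ⟨u, huM, hu⟩ := exists_separating (hS hMS) (hdiv M (hS hMS))
  have huT : u ∈ ⋂ N ∈ T, locSet R N :=
    Set.mem_iInter₂.2 fun N hN => hu N (hT hN) fun e => hMT (e ▸ hN)
  rw [← h] at huT
  exact huM (Set.mem_iInter₂.1 huT M hMS)

lemma isTSharp_of_divisorial (hdiv : ∀ M ∈ tMax R, IsDivisorialIdeal R M) : IsTSharp R :=
  fun _ _ h₁ h₂ hne h => hne <| Set.Subset.antisymm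
    (subset_of_iInter_locSet_eq hdiv h₁ h₂ h) (subset_of_iInter_locSet_eq hdiv h₂ h₁ h.symm)

lemma IsMori.wellFoundedGT (h : IsMori R) : WellFoundedGT {I : Ideal R // IsDivisorialIdeal R I} :=
  wellFoundedGT_iff_monotone_chain_condition.2 fun f => by
    obtain ⟨n, hn⟩ := h (fun k => (f k).1) (fun k => (f k).2) fun k => f.monotone k.le_succ
    exact ⟨n, fun m hm => Subtype.ext (hn m hm).symm⟩

lemma IsMori.isDivisorialIdeal (h : IsMori R) {M : Ideal R} (hM : IsTIdeal R M) :
    IsDivisorialIdeal R M := by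
  have := h.wellFoundedGT
  obtain ⟨b, hbM, hb0⟩ := Submodule.exists_mem_ne_zero_of_ne_bot hM.1
  -- The family of all `J_v` with `J ⊆ M` nonzero and finitely generated has a maximal member.
  obtain ⟨V, ⟨J, hJ, hJ0, hJM, hV⟩, hVmax⟩ := WellFounded.has_min
    (wellFounded_gt (α := {I : Ideal R // IsDivisorialIdeal R I}))
    {V | ∃ J : Ideal R, J.FG ∧ J ≠ ⊥ ∧ J ≤ M ∧ V.1 = vIdeal R J}
    (by
      have hb : Ideal.span {b} ≠ ⊥ := by simpa [Ideal.span_singleton_eq_bot] using hb0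
      exact ⟨⟨_, isDivisorialIdeal_vIdeal hb⟩, _, Submodule.fg_span_singleton b, hb,
        by simpa [Ideal.span_singleton_le_iff_mem] using hbM, rfl⟩)
  have hMJ : M ≤ vIdeal R J := by
    intro a ha
    have hne : J ⊔ Ideal.span {a} ≠ ⊥ := fun e => hJ0 (le_bot_iff.1 (e ▸ le_sup_left))
    -- Adjoining `a` to `J` cannot enlarge `J_v`.
    have hlt := hVmax ⟨_, isDivisorialIdeal_vIdeal hne⟩
      ⟨_, Submodule.FG.sup hJ (Submodule.fg_span_singleton a), hne,
        sup_le hJM (by simpa [Ideal.span_singleton_le_iff_mem] using ha), rfl⟩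
    have hle : V.1 ≤ vIdeal R (J ⊔ Ideal.span {a}) := hV ▸ vIdeal_mono le_sup_left
    have hge : vIdeal R (J ⊔ Ideal.span {a}) ≤ V.1 := by
      by_contra hn
      exact hlt (lt_of_le_not_ge hle hn)
    rw [← hV]
    exact hge (le_vIdeal _ (le_sup_right (a := J) (Ideal.mem_span_singleton_self a)))
  have hJM' : vIdeal R J ≤ M := (vIdeal_le_tIdeal hJ hJ0 hJM).trans_eq hM.2
  rw [le_antisymm hMJ hJM']
  exact isDivisorialIdeal_vIdeal hJ0

end Auxiliary

/-- **Corollary (1.3).**  If each maximal `t`-ideal of the integral domain `R` is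
divisorial, then `R` is a `t#`-domain.  In particular, every Mori domain is a
`t#`-domain. -/
theorem tsharp_of_maximal_t_ideals_divisorial (R : Type*) [CommRing R] [IsDomain R] :
    ((∀ M ∈ tMax R, IsDivisorialIdeal R M) → IsTSharp R) ∧
    (IsMori R → IsTSharp R) := by
  exact ⟨isTSharp_of_divisorial,
    fun h => isTSharp_of_divisorial fun _ hM => h.isDivisorialIdeal hM.1⟩

end TSharpPaper
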